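/- Let d ≥ 2, λ > 0, η ≥ 0. Then for all sufficiently large even L, (1/2)·Z^{+,per}_{L;λ,η} ≤ Z^{+,per}_{L;λ,η}[ φ_i ≤ V^{−1}((2d/λ) log L) for all i ∈ T_L^d ] ≤ Z^{+,per}_{L;λ,η}, where Z[A] denotes the restriction of the partition-function integral to configurations in A, and V^{−1}(y) = inf{x ≥ 0 : V(x) ≥ y}. -/

import Mathlib

open MeasureTheory Filter
open scoped Classical



/-- Nearest-neighbour adjacency on the torus `T_L^d = (ℤ/Lℤ)^d`. -/
def torusAdj (d L : ℕ) (i j : Fin d → ZMod L) : Prop :=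
  ∃ k : Fin d, j = Function.update i k (i k + 1) ∨ j = Function.update i k (i k - 1)

/-- The periodic Hamiltonian `H^{per}_{L;λ}(φ)`. -/
noncomputable def HamPer (d L : ℕ) [NeZero L] (lam : ℝ) (V : ℝ → ℝ)
    (ψ : (Fin d → ZMod L) → ℝ) : ℝ :=
  (1 / (8 * d)) * ∑ i, ∑ j, (if torusAdj d L i j then (ψ i - ψ j) ^ 2 else 0)
    + lam * ∑ i, V (ψ i)

/-- The a priori measure `∏_{i ∈ T_L^d} (dφ_i + η δ₀(dφ_i))` on the torus. -/
noncomputable def priorPer (d L : ℕ) [NeZero L] (η : ℝ) : Measure ((Fin d → ZMod L) → ℝ) :=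
  Measure.pi fun _ => (volume + ENNReal.ofReal η • Measure.dirac (0 : ℝ))

/-- Density `e^{-H^{per}_{L;λ}(φ)} 𝟙_{Ω₊}(φ)`. -/
noncomputable def densPer (d L : ℕ) [NeZero L] (lam : ℝ) (V : ℝ → ℝ)
    (φ : (Fin d → ZMod L) → ℝ) : ℝ :=
  if ∀ i, 0 ≤ φ i then Real.exp (-(HamPer d L lam V φ)) else 0

/-- The unnormalized Gibbs measure with hard wall, periodic boundary condition. -/
noncomputable def gibbsPer (d L : ℕ) [NeZero L] (lam η : ℝ) (V : ℝ → ℝ) :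
    Measure ((Fin d → ZMod L) → ℝ) :=
  (priorPer d L η).withDensity fun φ => ENNReal.ofReal (densPer d L lam V φ)

/-- The partition function `Z^{+,per}_{L;λ,η}`. -/
noncomputable def ZplusPer (d L : ℕ) [NeZero L] (lam η : ℝ) (V : ℝ → ℝ) : ℝ :=
  (gibbsPer d L lam η V Set.univ).toReal

/-- The restricted partition function `Z^{+,per}_{L;λ,η}[A]`. -/
noncomputable def ZplusPerIn (d L : ℕ) [NeZero L] (lam η : ℝ) (V : ℝ → ℝ)
    (A : Set ((Fin d → ZMod L) → ℝ)) : ℝ :=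
  (gibbsPer d L lam η V A).toReal

/-- The normalized Gibbs measure `μ^{+,per}_{L;λ,η}`. -/
noncomputable def muPer (d L : ℕ) [NeZero L] (lam η : ℝ) (V : ℝ → ℝ) :
    Measure ((Fin d → ZMod L) → ℝ) :=
  (gibbsPer d L lam η V Set.univ)⁻¹ • gibbsPer d L lam η V

/-- The periodic finite-volume free energy `f^{per}_L(λ,η)`. -/
noncomputable def freeEnergyPer (d L : ℕ) [NeZero L] (lam η : ℝ) (V : ℝ → ℝ) : ℝ :=
  ((L : ℝ) ^ d)⁻¹ * Real.log (ZplusPer d L lam η V / ZplusPer d L lam 0 V)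

/-- The generalized inverse `V⁻¹(y) = inf {x ≥ 0 : V(x) ≥ y}`. -/
noncomputable def Vinv (V : ℝ → ℝ) (y : ℝ) : ℝ :=
  sInf {x : ℝ | 0 ≤ x ∧ y ≤ V x}


/-- Cauchy–Schwarz inequality for lower Lebesgue integrals. -/
lemma lintegral_mul_sq_le {α : Type*} [MeasurableSpace α] (μ : Measure α) {f g : α → ENNReal}
    (hf : AEMeasurable f μ) (hg : AEMeasurable g μ) :
    (∫⁻ x, f x * g x ∂μ) ^ 2 ≤ (∫⁻ x, f x * f x ∂μ) * ∫⁻ x, g x * g x ∂μ := by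
  have h := ENNReal.lintegral_mul_le_Lp_mul_Lq μ Real.HolderConjugate.two_two hf hg
  have key : ∀ a : ENNReal, (a ^ (1 / (2 : ℝ))) ^ 2 = a := fun a => by
    rw [← ENNReal.rpow_natCast, ← ENNReal.rpow_mul]; norm_num
  calc (∫⁻ x, f x * g x ∂μ) ^ 2
      ≤ ((∫⁻ x, f x ^ (2 : ℝ) ∂μ) ^ (1 / (2 : ℝ)) *
          (∫⁻ x, g x ^ (2 : ℝ) ∂μ) ^ (1 / (2 : ℝ))) ^ 2 := by gcongr; exact h
    _ = _ := by
      rw [mul_pow, key, key]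
      simp only [ENNReal.rpow_two, pow_two]

/-- Integrating over a product space by grouping the coordinates into three blocks. -/
lemma lintegral_pi_eq_lintegral_blocks {ι Q S T : Type*} [Fintype ι] [Fintype Q] [Fintype S]
    [Fintype T] (e : Q ⊕ (S ⊕ T) ≃ ι) (ν : Measure ℝ) [SigmaFinite ν]
    {h : (ι → ℝ) → ENNReal} (hh : Measurable h) :
    ∫⁻ φ, h φ ∂(Measure.pi fun _ => ν) =
      ∫⁻ x : Q → ℝ, ∫⁻ y : S → ℝ, ∫⁻ z : T → ℝ,
        h (fun i => Sum.elim x (Sum.elim y z) (e.symm i))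
          ∂(Measure.pi fun _ => ν) ∂(Measure.pi fun _ => ν) ∂(Measure.pi fun _ => ν) := by
  have h1 := (measurePreserving_piCongrLeft (fun _ : ι => ν) e)
  have h2 := (measurePreserving_sumPiEquivProdPi_symm (fun _ : Q ⊕ (S ⊕ T) => ν))
  have h3 := (measurePreserving_sumPiEquivProdPi_symm (fun _ : S ⊕ T => ν))
  have e1 : ∀ φ : Q ⊕ (S ⊕ T) → ℝ,
      MeasurableEquiv.piCongrLeft (fun _ : ι => ℝ) e φ = fun i => φ (e.symm i) := by
    intro φ
    funext i
    obtain ⟨j, rfl⟩ := e.surjective i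
    rw [MeasurableEquiv.coe_piCongrLeft, Equiv.piCongrLeft_apply_apply, Equiv.symm_apply_apply]
  have m1 : Measurable fun φ : Q ⊕ (S ⊕ T) → ℝ => h (fun i => φ (e.symm i)) :=
    hh.comp (measurable_pi_lambda _ fun i => measurable_pi_apply _)
  rw [← h1.lintegral_comp hh]
  simp only [e1]
  rw [← h2.lintegral_comp m1, lintegral_prod]
  · refine lintegral_congr fun x => ?_
    have m2 : Measurable fun w : S ⊕ T → ℝ => h (fun i => Sum.elim x w (e.symm i)) := by
      refine hh.comp (measurable_pi_lambda _ fun i => ?_)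
      rcases e.symm i with q | s
      · exact measurable_const
      · exact measurable_pi_apply _
    have e2 : ∀ w : S ⊕ T → ℝ,
        (MeasurableEquiv.sumPiEquivProdPi fun _ : Q ⊕ (S ⊕ T) => ℝ).symm (x, w) =
          Sum.elim x w := by
      intro w; funext i; rcases i with q | s <;> rfl
    have e3 : ∀ y : S → ℝ, ∀ z : T → ℝ,
        (MeasurableEquiv.sumPiEquivProdPi fun _ : S ⊕ T => ℝ).symm (y, z) = Sum.elim y z := by
      intro y z; funext i; rcases i with q | s <;> rfl
    simp only [e2]
    rw [← h3.lintegral_comp m2, lintegral_prod]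
    · simp only [e3]
    · exact (m2.comp (MeasurableEquiv.measurable _)).aemeasurable
  · exact (m1.comp (MeasurableEquiv.measurable _)).aemeasurable

/-- Cauchy–Schwarz inequality for functions which, in block coordinates `(x, y, z)`, only depend on
`(x, y)`, where `θ` exchanges the blocks `y` and `z`. -/
lemma lintegral_blocks_sq_le {ι Q S : Type*} [Fintype ι] [Fintype Q] [Fintype S]
    (e : Q ⊕ (S ⊕ S) ≃ ι) (ν : Measure ℝ) [SigmaFinite ν]
    {f g : (ι → ℝ) → ENNReal} (hf : Measurable f) (hg : Measurable g)
    (f' g' : (Q → ℝ) × (S → ℝ) → ENNReal) (θ : ι → ι)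
    (hθ : ∀ x y z i, Sum.elim x (Sum.elim y z) (e.symm (θ i)) =
      (Sum.elim x (Sum.elim z y) (e.symm i) : ℝ))
    (hf'm : Measurable f') (hg'm : Measurable g')
    (hf' : ∀ x y z, f (fun i => Sum.elim x (Sum.elim y z) (e.symm i)) = f' (x, y))
    (hg' : ∀ x y z, g (fun i => Sum.elim x (Sum.elim y z) (e.symm i)) = g' (x, y)) :
    (∫⁻ φ, f φ * g (fun i => φ (θ i)) ∂(Measure.pi fun _ => ν)) ^ 2 ≤
      (∫⁻ φ, f φ * f (fun i => φ (θ i)) ∂(Measure.pi fun _ => ν)) *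
        ∫⁻ φ, g φ * g (fun i => φ (θ i)) ∂(Measure.pi fun _ => ν) := by
  have hm : Measurable fun φ : ι → ℝ => fun i => φ (θ i) :=
    measurable_pi_lambda _ fun i => measurable_pi_apply _
  have hsec : ∀ u : (Q → ℝ) × (S → ℝ) → ENNReal, Measurable u → ∀ x, Measurable fun y => u (x, y) :=
    fun u hu x => hu.comp (measurable_const.prodMk measurable_id)
  have factor : ∀ u v : (Q → ℝ) × (S → ℝ) → ENNReal, Measurable u → Measurable v → ∀ x,
      ∫⁻ y : S → ℝ, ∫⁻ z : S → ℝ, u (x, y) * v (x, z)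
        ∂(Measure.pi fun _ => ν) ∂(Measure.pi fun _ => ν) =
      (∫⁻ y, u (x, y) ∂(Measure.pi fun _ => ν)) * ∫⁻ z, v (x, z) ∂(Measure.pi fun _ => ν) := by
    intro u v hu hv x
    simp_rw [lintegral_const_mul _ (hsec v hv x)]
    rw [lintegral_mul_const _ (hsec u hu x)]
  have hmul : ∀ u v : (ι → ℝ) → ENNReal, Measurable u → Measurable v →
      Measurable fun φ => u φ * v (fun i => φ (θ i)) := fun u v hu hv => hu.mul (hv.comp hm)
  rw [lintegral_pi_eq_lintegral_blocks e ν (hmul f g hf hg),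
    lintegral_pi_eq_lintegral_blocks e ν (hmul f f hf hf),
    lintegral_pi_eq_lintegral_blocks e ν (hmul g g hg hg)]
  simp only [hθ, hf', hg']
  simp only [factor _ _ hf'm hg'm, factor _ _ hf'm hf'm, factor _ _ hg'm hg'm]
  exact lintegral_mul_sq_le _ hf'm.lintegral_prod_right'.aemeasurable
    hg'm.lintegral_prod_right'.aemeasurable

/-- Reflection positivity, in Cauchy–Schwarz form: `θ` is an involution of the index set, whose
non-fixed points are the disjoint union of `R` and its image. -/
lemma lintegral_reflection_sq_le {ι : Type*} [Fintype ι] (ν : Measure ℝ) [SigmaFinite ν]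
    (θ : ι → ι) (hθ : Function.Involutive θ) (R : ι → Prop) (hR : ∀ i, R i → ¬ R (θ i))
    (hfix : ∀ i, ¬ R i → ¬ R (θ i) → θ i = i)
    {f g : (ι → ℝ) → ENNReal} (hf : Measurable f) (hg : Measurable g)
    (hfd : DependsOn f {i | ¬ R (θ i)}) (hgd : DependsOn g {i | ¬ R (θ i)}) :
    (∫⁻ φ, f φ * g (fun i => φ (θ i)) ∂(Measure.pi fun _ => ν)) ^ 2 ≤
      (∫⁻ φ, f φ * f (fun i => φ (θ i)) ∂(Measure.pi fun _ => ν)) *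
        ∫⁻ φ, g φ * g (fun i => φ (θ i)) ∂(Measure.pi fun _ => ν) := by
  let e : {i // ¬ R i ∧ ¬ R (θ i)} ⊕ ({i // R i} ⊕ {i // R i}) ≃ ι :=
    { toFun := Sum.elim (fun q => q.1) (Sum.elim (fun s => s.1) fun s => θ s.1)
      invFun := fun i => if h : R i then .inr (.inl ⟨i, h⟩) else
        if h' : R (θ i) then .inr (.inr ⟨θ i, h'⟩) else .inl ⟨i, h, h'⟩
      left_inv := by
        rintro (⟨q, h1, h2⟩ | ⟨s, hs⟩ | ⟨s, hs⟩)
        · simp [h1, h2]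
        · simp [hs]
        · simp [hR s hs, hθ s, hs]
      right_inv := by
        intro i
        by_cases h : R i
        · simp [h]
        · by_cases h' : R (θ i)
          · simp [h, h', hθ i]
          · simp [h, h'] }
  have he : ∀ i, e.symm i = if h : R i then .inr (.inl ⟨i, h⟩) else
        if h' : R (θ i) then .inr (.inr ⟨θ i, h'⟩) else .inl ⟨i, h, h'⟩ := fun i => rfl
  have hsplit : ∀ u : (ι → ℝ) → ENNReal, DependsOn u {i | ¬ R (θ i)} → ∀ x y z,
      u (fun i => Sum.elim x (Sum.elim y z) (e.symm i)) =
        u (fun i => Sum.elim x (Sum.elim y 0) (e.symm i)) := by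
    intro u hu x y z
    refine hu fun i hi => ?_
    by_cases h : R i
    · simp [he, h]
    · simp only [Set.mem_ofPred_eq] at hi
      simp [he, h, hi]
  have hmeas : Measurable fun p : ({i // ¬ R i ∧ ¬ R (θ i)} → ℝ) × ({i // R i} → ℝ) =>
      fun i => (Sum.elim p.1 (Sum.elim p.2 0) (e.symm i) : ℝ) := by
    refine measurable_pi_lambda _ fun i => ?_
    rcases e.symm i with q | s | s
    · exact (measurable_pi_apply q).comp measurable_fst
    · exact (measurable_pi_apply s).comp measurable_snd
    · exact measurable_const
  refine lintegral_blocks_sq_le e ν hf hg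
    (fun p => f fun i => Sum.elim p.1 (Sum.elim p.2 0) (e.symm i))
    (fun p => g fun i => Sum.elim p.1 (Sum.elim p.2 0) (e.symm i)) θ ?_
    (hf.comp hmeas) (hg.comp hmeas) (hsplit f hfd) (hsplit g hgd)
  intro x y z i
  by_cases h : R i
  · simp [he, h, hR i h, hθ i]
  · by_cases h' : R (θ i)
    · simp [he, h, h']
    · simp [he, h, hfix i h h']

section Reflection

variable {d L : ℕ} [NeZero L] (θ : (Fin d → ZMod L) → (Fin d → ZMod L))
  (R : (Fin d → ZMod L) → Prop)

/-- The part of the periodic Hamiltonian carried by the closed half-torus `{i | ¬ R (θ i)}`, where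
contributions inside the reflection plane get weight `1 / 2`. -/
noncomputable def halfHam (lam : ℝ) (V : ℝ → ℝ) (ψ : (Fin d → ZMod L) → ℝ) : ℝ :=
  (1 / (8 * d)) * ∑ i, ∑ j, (if torusAdj d L i j then
      (if R i ∨ R j then 1 else if R (θ i) ∨ R (θ j) then 0 else 1 / 2) * (ψ i - ψ j) ^ 2 else 0)
    + lam * ∑ i, (if R i then 1 else if R (θ i) then 0 else 1 / 2) * V (ψ i)

/-- The hard-wall Boltzmann weight of the closed half-torus `{i | ¬ R (θ i)}`. -/
noncomputable def halfDens (lam : ℝ) (V : ℝ → ℝ) (φ : (Fin d → ZMod L) → ℝ) : ℝ :=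
  if ∀ i, ¬ R (θ i) → 0 ≤ φ i then Real.exp (-(halfHam θ R lam V φ)) else 0

variable {θ R}

lemma HamPer_eq_halfHam_add (hθ : Function.Involutive θ) (hR : ∀ i, R i → ¬ R (θ i))
    (hadj : ∀ i j, torusAdj d L i j → R i → ¬ R (θ j))
    (hadjθ : ∀ i j, torusAdj d L (θ i) (θ j) ↔ torusAdj d L i j)
    (lam : ℝ) (V : ℝ → ℝ) (φ : (Fin d → ZMod L) → ℝ) :
    HamPer d L lam V φ = halfHam θ R lam V φ + halfHam θ R lam V (fun i => φ (θ i)) := by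
  have hV : ∑ i, V (φ i) = ∑ i, (if R i then 1 else if R (θ i) then 0 else 1 / 2) * V (φ i) +
      ∑ i, (if R i then 1 else if R (θ i) then 0 else 1 / 2) * V (φ (θ i)) := by
    rw [← Equiv.sum_comp hθ.toPerm
      (fun i => (if R i then 1 else if R (θ i) then 0 else 1 / 2) * V (φ (θ i))),
      ← Finset.sum_add_distrib]
    refine Finset.sum_congr rfl fun i _ => ?_
    simp only [Function.Involutive.coe_toPerm, hθ i]
    have := hR i
    by_cases h1 : R i <;> by_cases h2 : R (θ i) <;> simp_all; ring
  have hre : ∀ F : (Fin d → ZMod L) → (Fin d → ZMod L) → ℝ,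
      ∑ i, ∑ j, F i j = ∑ i, ∑ j, F (θ i) (θ j) := fun F => by
    rw [← Equiv.sum_comp hθ.toPerm]
    exact Finset.sum_congr rfl fun i _ => (Equiv.sum_comp hθ.toPerm (F (θ i))).symm
  have hG : ∑ i, ∑ j, (if torusAdj d L i j then (φ i - φ j) ^ 2 else 0) =
      ∑ i, ∑ j, (if torusAdj d L i j then
        (if R i ∨ R j then 1 else if R (θ i) ∨ R (θ j) then 0 else 1 / 2) *
          (φ i - φ j) ^ 2 else 0) +
      ∑ i, ∑ j, (if torusAdj d L i j then
        (if R i ∨ R j then 1 else if R (θ i) ∨ R (θ j) then 0 else 1 / 2) *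
          (φ (θ i) - φ (θ j)) ^ 2 else 0) := by
    rw [hre (fun i j => if torusAdj d L i j then
        (if R i ∨ R j then 1 else if R (θ i) ∨ R (θ j) then 0 else 1 / 2) *
          (φ (θ i) - φ (θ j)) ^ 2 else 0), ← Finset.sum_add_distrib]
    refine Finset.sum_congr rfl fun i _ => ?_
    rw [← Finset.sum_add_distrib]
    refine Finset.sum_congr rfl fun j _ => ?_
    simp only [hθ i, hθ j, hadjθ]
    by_cases hij : torusAdj d L i j
    · have h1 := hadj i j hij
      have h2 := hadj (θ i) (θ j) ((hadjθ i j).2 hij)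
      rw [hθ j] at h2
      have h3 := hR i
      have h4 := hR j
      simp only [hij, if_true]
      by_cases hX : R i ∨ R j
      · have hY : ¬ (R (θ i) ∨ R (θ j)) := by tauto
        simp [hX, hY]
      · by_cases hY : R (θ i) ∨ R (θ j)
        · simp [hX, hY]
        · simp only [hX, hY, if_false]; ring
    · simp [hij]
  unfold HamPer halfHam
  rw [hG, hV]
  ring

lemma densPer_eq_halfDens_mul (hθ : Function.Involutive θ) (hR : ∀ i, R i → ¬ R (θ i))
    (hadj : ∀ i j, torusAdj d L i j → R i → ¬ R (θ j))
    (hadjθ : ∀ i j, torusAdj d L (θ i) (θ j) ↔ torusAdj d L i j)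
    (lam : ℝ) (V : ℝ → ℝ) (φ : (Fin d → ZMod L) → ℝ) :
    densPer d L lam V φ = halfDens θ R lam V φ * halfDens θ R lam V (fun i => φ (θ i)) := by
  unfold densPer halfDens
  have hiff : (∀ i, 0 ≤ φ i) ↔
      (∀ i, ¬ R (θ i) → 0 ≤ φ i) ∧ ∀ i, ¬ R (θ i) → 0 ≤ φ (θ i) := by
    refine ⟨fun h => ⟨fun i _ => h i, fun i _ => h _⟩, fun ⟨h1, h2⟩ i => ?_⟩
    by_cases h : R (θ i)
    · have := h2 (θ i) (hR _ h)
      rwa [hθ i] at this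
    · exact h1 i h
  by_cases h1 : ∀ i, ¬ R (θ i) → 0 ≤ φ i
  · by_cases h2 : ∀ i, ¬ R (θ i) → 0 ≤ φ (θ i)
    · rw [if_pos (hiff.2 ⟨h1, h2⟩), if_pos h1, if_pos h2,
        HamPer_eq_halfHam_add hθ hR hadj hadjθ, neg_add, Real.exp_add]
    · rw [if_neg (fun h => h2 (hiff.1 h).2), if_neg h2, mul_zero]
  · rw [if_neg (fun h => h1 (hiff.1 h).1), if_neg h1, zero_mul]

lemma dependsOn_halfDens (hR : ∀ i, R i → ¬ R (θ i))
    (hadj : ∀ i j, torusAdj d L i j → R i → ¬ R (θ j))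
    (hsymm : ∀ i j, torusAdj d L i j → torusAdj d L j i) (lam : ℝ) (V : ℝ → ℝ) :
    DependsOn (halfDens θ R lam V) {i | ¬ R (θ i)} := by
  intro φ ψ h
  have h' : ∀ i, ¬ R (θ i) → φ i = ψ i := fun i hi => h i hi
  have hH : halfHam θ R lam V φ = halfHam θ R lam V ψ := by
    unfold halfHam
    congr 2
    · refine Finset.sum_congr rfl fun i _ => Finset.sum_congr rfl fun j _ => ?_
      by_cases hij : torusAdj d L i j
      · simp only [hij, if_true]
        by_cases hX : R i ∨ R j
        · have := hadj i j hij
          have := hadj j i (hsymm i j hij)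
          have := hR i
          have := hR j
          rw [h' i (by tauto), h' j (by tauto)]
        · by_cases hY : R (θ i) ∨ R (θ j)
          · simp [hX, hY]
          · rw [h' i (by tauto), h' j (by tauto)]
      · simp [hij]
    · refine Finset.sum_congr rfl fun i _ => ?_
      have := hR i
      by_cases h2 : R (θ i)
      · have h1 : ¬ R i := by tauto
        simp [h1, h2]
      · rw [h' i h2]
  unfold halfDens
  rw [hH]
  refine if_congr ⟨fun hp i hi => ?_, fun hp i hi => ?_⟩ rfl rfl
  · rw [← h' i hi]; exact hp i hi
  · rw [h' i hi]; exact hp i hi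

lemma measurable_halfDens (lam : ℝ) {V : ℝ → ℝ} (hV : Measurable V) :
    Measurable (halfDens θ R lam V) := by
  have hH : Measurable (halfHam θ R lam V) := by
    unfold halfHam
    refine ((Finset.measurable_sum _ fun i _ => Finset.measurable_sum _ fun j _ => ?_).const_mul
      _).add ((Finset.measurable_sum _ fun i _ => ?_).const_mul _)
    · by_cases hij : torusAdj d L i j
      · simp only [hij, if_true]
        exact (((measurable_pi_apply i).sub (measurable_pi_apply j)).pow_const 2).const_mul _
      · simp only [hij, if_false]
        exact measurable_const
    · exact (hV.comp (measurable_pi_apply i)).const_mul _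
  unfold halfDens
  refine Measurable.ite ?_ hH.neg.exp measurable_const
  simp only [Set.ofPred_forall]
  refine MeasurableSet.iInter fun i => MeasurableSet.iInter fun _ => ?_
  exact measurableSet_le measurable_const (measurable_pi_apply i)

/-- The measurable set of configurations exceeding `M` on `A`. -/
lemma measurableSet_forall_lt {ι : Type*} [Countable ι] (A : Set ι) (M : ℝ) :
    MeasurableSet {φ : ι → ℝ | ∀ i ∈ A, M < φ i} := by
  simp only [Set.ofPred_forall]
  exact MeasurableSet.iInter fun i => MeasurableSet.iInter fun _ =>
    measurableSet_lt measurable_const (measurable_pi_apply i)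

instance sigmaFinite_volume_add_dirac (η : ℝ) :
    SigmaFinite (volume + ENNReal.ofReal η • Measure.dirac (0 : ℝ)) := by
  have : IsFiniteMeasure (ENNReal.ofReal η • Measure.dirac (0 : ℝ)) :=
    Measure.smul_finite _ ENNReal.ofReal_ne_top
  infer_instance

/-- Reflection positivity: the probability of being high on `A` squared is at most the probability
of being high on `A` and its reflection. -/
lemma gibbsPer_forall_lt_sq_le (hθ : Function.Involutive θ) (hR : ∀ i, R i → ¬ R (θ i))
    (hfix : ∀ i, ¬ R i → ¬ R (θ i) → θ i = i)
    (hadj : ∀ i j, torusAdj d L i j → R i → ¬ R (θ j))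
    (hsymm : ∀ i j, torusAdj d L i j → torusAdj d L j i)
    (hadjθ : ∀ i j, torusAdj d L (θ i) (θ j) ↔ torusAdj d L i j)
    (lam η : ℝ) {V : ℝ → ℝ} (hV : Measurable V) (A : Set (Fin d → ZMod L))
    (hA : ∀ i ∈ A, ¬ R (θ i)) (M : ℝ) :
    gibbsPer d L lam η V {φ | ∀ i ∈ A, M < φ i} ^ 2 ≤
      gibbsPer d L lam η V {φ | ∀ i ∈ A, M < φ i ∧ M < φ (θ i)} *
        gibbsPer d L lam η V Set.univ := by
  set E : Set ((Fin d → ZMod L) → ℝ) := {φ | ∀ i ∈ A, M < φ i} with hE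
  have hEm : MeasurableSet E := measurableSet_forall_lt A M
  have hmθ : Measurable fun φ : (Fin d → ZMod L) → ℝ => fun i => φ (θ i) :=
    measurable_pi_lambda _ fun i => measurable_pi_apply _
  let g : ((Fin d → ZMod L) → ℝ) → ENNReal := fun φ => ENNReal.ofReal (halfDens θ R lam V φ)
  let f : ((Fin d → ZMod L) → ℝ) → ENNReal := E.indicator g
  have hg : Measurable g := (measurable_halfDens lam hV).ennreal_ofReal
  have hf : Measurable f := hg.indicator hEm
  have hgd : DependsOn g {i | ¬ R (θ i)} := fun φ ψ h => by
    simp only [g, dependsOn_halfDens hR hadj hsymm lam V h]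
  have hfd : DependsOn f {i | ¬ R (θ i)} := by
    intro φ ψ h
    have hiff : φ ∈ E ↔ ψ ∈ E := by
      refine forall_congr' fun i => forall_congr' fun hi => ?_
      rw [h i (hA i hi)]
    by_cases hφ : φ ∈ E
    · simp only [f]
      rw [Set.indicator_of_mem hφ, Set.indicator_of_mem (hiff.1 hφ)]
      exact hgd h
    · simp only [f]
      rw [Set.indicator_of_notMem hφ, Set.indicator_of_notMem (fun h => hφ (hiff.2 h))]
  have hnn : ∀ φ, 0 ≤ halfDens θ R lam V φ := fun φ => by
    unfold halfDens; split_ifs <;> positivity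
  have hdens : ∀ φ, ENNReal.ofReal (densPer d L lam V φ) = g φ * g (fun i => φ (θ i)) :=
    fun φ => by
      rw [densPer_eq_halfDens_mul hθ hR hadj hadjθ, ENNReal.ofReal_mul (hnn _)]
  have hE2 : {φ : (Fin d → ZMod L) → ℝ | ∀ i ∈ A, M < φ i ∧ M < φ (θ i)} =
      E ∩ (fun φ i => φ (θ i)) ⁻¹' E := by
    ext φ
    exact ⟨fun h => ⟨fun i hi => (h i hi).1, fun i hi => (h i hi).2⟩,
      fun h i hi => ⟨h.1 i hi, h.2 i hi⟩⟩
  have key := lintegral_reflection_sq_le (volume + ENNReal.ofReal η • Measure.dirac (0 : ℝ))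
    θ hθ R hR hfix hf hg hfd hgd
  unfold gibbsPer priorPer
  rw [hE2, withDensity_apply _ hEm, withDensity_apply _ (hEm.inter (hmθ hEm)),
    withDensity_apply _ MeasurableSet.univ, setLIntegral_univ, ← lintegral_indicator hEm,
    ← lintegral_indicator (hEm.inter (hmθ hEm))]
  convert key using 4 with φ φ
  · by_cases hφ : φ ∈ E <;> simp [f, hφ, hdens]
  · by_cases hφ : φ ∈ E <;> by_cases hφ' : (fun i => φ (θ i)) ∈ E <;> simp [f, hφ, hφ', hdens]
  · exact hdens _

end Reflection

section Torus

variable {d L : ℕ}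

/-- Reflection of the torus in the hyperplane `{x | x k = a}`. -/
def torusReflection (k : Fin d) (a : ZMod L) (x : Fin d → ZMod L) : Fin d → ZMod L :=
  Function.update x k (2 * a - x k)

lemma torusReflection_involutive (k : Fin d) (a : ZMod L) :
    Function.Involutive (torusReflection k a) := by
  intro x
  simp [torusReflection]

lemma torusAdj_symm {i j : Fin d → ZMod L} (h : torusAdj d L i j) : torusAdj d L j i := by
  obtain ⟨k, rfl | rfl⟩ := h
  · exact ⟨k, Or.inr (by simp)⟩
  · exact ⟨k, Or.inl (by simp)⟩

lemma torusAdj_torusReflection (k : Fin d) (a : ZMod L) {i j : Fin d → ZMod L}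
    (h : torusAdj d L i j) :
    torusAdj d L (torusReflection k a i) (torusReflection k a j) := by
  obtain ⟨l, hl⟩ := h
  refine ⟨l, ?_⟩
  by_cases hlk : l = k
  · subst hlk
    rcases hl with rfl | rfl
    · right
      simp only [torusReflection, Function.update_self, Function.update_idem]
      congr 1; ring
    · left
      simp only [torusReflection, Function.update_self, Function.update_idem]
      congr 1; ring
  · rcases hl with rfl | rfl
    · left
      simp only [torusReflection, Function.update_of_ne hlk, Function.update_of_ne (Ne.symm hlk)]
      rw [Function.update_comm hlk]
    · right
      simp only [torusReflection, Function.update_of_ne hlk, Function.update_of_ne (Ne.symm hlk)]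
      rw [Function.update_comm hlk]

lemma torusAdj_torusReflection_iff (k : Fin d) (a : ZMod L) (i j : Fin d → ZMod L) :
    torusAdj d L (torusReflection k a i) (torusReflection k a j) ↔ torusAdj d L i j := by
  refine ⟨fun h => ?_, torusAdj_torusReflection k a⟩
  have := torusAdj_torusReflection k a h
  rwa [torusReflection_involutive k a i, torusReflection_involutive k a j] at this

/-- The sites strictly on one side of the hyperplanes `{x | x k = a}` and `{x | x k = a + L / 2}`. -/
def strictHalf (k : Fin d) (a : ZMod L) (x : Fin d → ZMod L) : Prop :=
  0 < (a - x k).val ∧ 2 * (a - x k).val < L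

lemma sub_torusReflection_apply (k : Fin d) (a : ZMod L) (x : Fin d → ZMod L) :
    a - torusReflection k a x k = -(a - x k) := by
  simp [torusReflection]; ring

lemma zmod_neg_val_add [NeZero L] {v : ZMod L} (hv : v.val ≠ 0) : (-v).val + v.val = L := by
  have hv0 : v ≠ 0 := fun h => hv (by simp [h])
  rw [ZMod.neg_val, if_neg hv0]
  have := v.val_lt
  omega

lemma not_strictHalf_torusReflection_iff [NeZero L] (k : Fin d) (a : ZMod L)
    (x : Fin d → ZMod L) :
    ¬ strictHalf k a (torusReflection k a x) ↔ 2 * (a - x k).val ≤ L := by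
  unfold strictHalf
  rw [sub_torusReflection_apply]
  by_cases hv : (a - x k).val = 0
  · have hv0 : a - x k = 0 := (ZMod.val_eq_zero _).1 hv
    simp [hv0]
  · have := zmod_neg_val_add hv
    have := (a - x k).val_lt
    omega

lemma torusReflection_eq_self [NeZero L] (k : Fin d) (a : ZMod L) (x : Fin d → ZMod L)
    (h1 : ¬ strictHalf k a x) (h2 : ¬ strictHalf k a (torusReflection k a x)) :
    torusReflection k a x = x := by
  rw [not_strictHalf_torusReflection_iff] at h2
  unfold strictHalf at h1
  have hneg : -(a - x k) = a - x k := by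
    by_cases hv : (a - x k).val = 0
    · have hv0 : a - x k = 0 := (ZMod.val_eq_zero _).1 hv
      simp [hv0]
    · apply ZMod.val_injective
      have := zmod_neg_val_add hv
      omega
  have : 2 * a - x k = x k := by linear_combination -hneg
  unfold torusReflection
  rw [this, Function.update_eq_self]

lemma not_strictHalf_of_torusAdj [NeZero L] (k : Fin d) (a : ZMod L) (i j : Fin d → ZMod L)
    (hL : Even L) (h : torusAdj d L i j) (hi : strictHalf k a i) :
    ¬ strictHalf k a (torusReflection k a j) := by
  rw [not_strictHalf_torusReflection_iff]
  unfold strictHalf at hi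
  obtain ⟨m, hm⟩ := hL
  obtain ⟨l, hl⟩ := h
  by_cases hlk : k = l
  · subst hlk
    have hcast : a - i k = ((a - i k).val : ZMod L) := (ZMod.natCast_zmod_val _).symm
    set n := (a - i k).val
    rcases hl with rfl | rfl
    · have : a - Function.update i k (i k + 1) k = ((n - 1 : ℕ) : ZMod L) := by
        rw [Nat.cast_sub hi.1, ← hcast]; simp; ring
      rw [this, ZMod.val_natCast_of_lt (by omega)]
      omega
    · have : a - Function.update i k (i k - 1) k = ((n + 1 : ℕ) : ZMod L) := by
        rw [Nat.cast_add, ← hcast]; simp; ring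
      rw [this, ZMod.val_natCast_of_lt (by omega)]
      omega
  · rcases hl with rfl | rfl
    · rw [Function.update_of_ne hlk]; omega
    · rw [Function.update_of_ne hlk]; omega

/-- The box with corner `i`, spacing `2` and side lengths `2 ^ n k`. -/
def dyadicBox (i : Fin d → ZMod L) (n : Fin d → ℕ) : Set (Fin d → ZMod L) :=
  {x | ∀ k, ∃ t < 2 ^ n k, x k = i k + 2 * (t : ℕ)}

lemma gibbsPer_dyadicBox_sq_le [NeZero L] (hL : Even L) (lam η : ℝ) {V : ℝ → ℝ}
    (hV : Measurable V) (M : ℝ) (i : Fin d → ZMod L) (n : Fin d → ℕ) (k : Fin d)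
    (hn : 2 * 2 ^ (n k + 1) ≤ L) :
    gibbsPer d L lam η V {φ | ∀ x ∈ dyadicBox i n, M < φ x} ^ 2 ≤
      gibbsPer d L lam η V
        {φ | ∀ x ∈ dyadicBox i (Function.update n k (n k + 1)), M < φ x} *
        gibbsPer d L lam η V Set.univ := by
  set a : ZMod L := i k + ((2 ^ (n k + 1) - 1 : ℕ) : ZMod L) with ha
  have hpow : 2 ^ (n k + 1) = 2 * 2 ^ n k := pow_succ' 2 (n k)
  have hpos : 0 < 2 ^ n k := by positivity
  have hbox : ∀ x ∈ dyadicBox i n, ¬ strictHalf k a (torusReflection k a x) := by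
    intro x hx
    rw [not_strictHalf_torusReflection_iff]
    obtain ⟨t, ht, hxt⟩ := hx k
    have : a - x k = ((2 ^ (n k + 1) - 1 - 2 * t : ℕ) : ZMod L) := by
      rw [Nat.cast_sub (by omega), ha, hxt]; push_cast; ring
    rw [this, ZMod.val_natCast_of_lt (by omega)]
    omega
  refine (gibbsPer_forall_lt_sq_le (torusReflection_involutive k a) (R := strictHalf k a)
    (fun x hx => ?_) (torusReflection_eq_self k a)
    (fun x y hxy => not_strictHalf_of_torusAdj k a x y hL hxy) (fun x y => torusAdj_symm)
    (torusAdj_torusReflection_iff k a) lam η hV _ hbox M).trans ?_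
  · rw [not_strictHalf_torusReflection_iff]
    exact hx.2.le
  · refine mul_le_mul' (measure_mono fun φ hφ x hx => ?_) le_rfl
    by_cases hxn : x ∈ dyadicBox i n
    · exact (hφ x hxn).1
    · have hrefl : torusReflection k a x ∈ dyadicBox i n := by
        intro l
        by_cases hlk : l = k
        · subst hlk
          obtain ⟨t, ht, hxt⟩ := hx l
          rw [Function.update_self] at ht
          have ht' : 2 ^ n l ≤ t := by
            by_contra hlt
            refine hxn fun l' => ?_
            by_cases h' : l' = l
            · subst h'
              exact ⟨t, by omega, hxt⟩
            · obtain ⟨s, hs, hxs⟩ := hx l'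
              rw [Function.update_of_ne h'] at hs
              exact ⟨s, hs, hxs⟩
          refine ⟨2 ^ (n l + 1) - 1 - t, by omega, ?_⟩
          rw [Nat.cast_sub (by omega), torusReflection, Function.update_self, hxt, ha]
          ring
        · obtain ⟨s, hs, hxs⟩ := hx l
          rw [Function.update_of_ne hlk] at hs
          refine ⟨s, hs, ?_⟩
          rw [torusReflection, Function.update_of_ne hlk, hxs]
      have := (hφ _ hrefl).2
      rwa [torusReflection_involutive k a x] at this

/-- Chessboard-type estimate: the probability that one site is high is controlled by the
probability that a whole dyadic box is high. -/
lemma gibbsPer_real_pow_le [NeZero L] (hL : Even L) (lam η : ℝ) {V : ℝ → ℝ}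
    (hV : Measurable V) [IsFiniteMeasure (gibbsPer d L lam η V)]
    (hZ : 0 < (gibbsPer d L lam η V).real Set.univ) (M : ℝ) (i : Fin d → ZMod L) (K : ℕ)
    (hK : 2 * 2 ^ K ≤ L) (N : ℕ) (n : Fin d → ℕ) (hn : ∀ k, n k ≤ K) (hN : ∑ k, n k = N) :
    ((gibbsPer d L lam η V).real {φ | M < φ i} / (gibbsPer d L lam η V).real Set.univ) ^ 2 ^ N ≤
      (gibbsPer d L lam η V).real {φ | ∀ x ∈ dyadicBox i n, M < φ x} /
        (gibbsPer d L lam η V).real Set.univ := by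
  set μ := gibbsPer d L lam η V with hμ
  induction N generalizing n with
  | zero =>
    have h0 : ∀ k, n k = 0 := fun k => by
      simpa using (Finset.sum_eq_zero_iff.1 hN) k (Finset.mem_univ k)
    rw [pow_zero, pow_one]
    gcongr
    · exact measure_ne_top _ _
    · intro hφ x hx
      have : x = i := by
        funext k
        obtain ⟨t, ht, hxt⟩ := hx k
        rw [h0 k] at ht
        have : t = 0 := by omega
        simpa [this] using hxt
      rw [this]
      exact hφ
  | succ N ih =>
    have hex : ∃ k, n k ≠ 0 := by
      by_contra! h
      simp [h] at hN
    obtain ⟨k, hk⟩ := hex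
    set n' := Function.update n k (n k - 1) with hn'
    have hnn' : Function.update n' k (n' k + 1) = n := by
      simp only [hn', Function.update_self, Function.update_idem]
      rw [Nat.sub_add_cancel (by omega), Function.update_eq_self]
    have hle : ∀ l, n' l ≤ K := by
      intro l
      by_cases h : l = k
      · subst h; simp only [hn', Function.update_self]; have := hn l; omega
      · simp only [hn', Function.update_of_ne h]; exact hn l
    have hsum : ∑ l, n' l = N := by
      have h1 := Finset.sum_update_of_mem (Finset.mem_univ k) n (n k - 1)
      have h2 := Finset.add_sum_erase Finset.univ n (Finset.mem_univ k)
      rw [← Finset.sdiff_singleton_eq_erase] at h2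
      rw [hn', h1]
      omega
    have hstep := gibbsPer_dyadicBox_sq_le hL lam η hV M i n' k (by
      have : n' k + 1 ≤ K := by
        simp only [hn', Function.update_self]; have := hn k; omega
      calc 2 * 2 ^ (n' k + 1) ≤ 2 * 2 ^ K := by gcongr; norm_num
        _ ≤ L := hK)
    rw [hnn'] at hstep
    have hreal := ENNReal.toReal_mono (by finiteness) hstep
    rw [ENNReal.toReal_pow, ENNReal.toReal_mul] at hreal
    have hprev := ih n' hle hsum
    calc (μ.real {φ | M < φ i} / μ.real Set.univ) ^ 2 ^ (N + 1)
        = ((μ.real {φ | M < φ i} / μ.real Set.univ) ^ 2 ^ N) ^ 2 := by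
          rw [← pow_mul, pow_succ]
      _ ≤ (μ.real {φ | ∀ x ∈ dyadicBox i n', M < φ x} / μ.real Set.univ) ^ 2 := by
          gcongr
      _ ≤ μ.real {φ | ∀ x ∈ dyadicBox i n, M < φ x} / μ.real Set.univ := by
          rw [div_pow, div_le_div_iff₀ (by positivity) hZ, pow_two (μ.real Set.univ), ← mul_assoc]
          exact mul_le_mul_of_nonneg_right hreal hZ.le

/-- The dyadic box of side `2 ^ K` contains `2 ^ (d * K)` distinct sites. -/
lemma exists_finset_subset_dyadicBox [NeZero L] (i : Fin d → ZMod L) (K : ℕ)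
    (hK : 2 * 2 ^ K ≤ L) :
    ∃ A : Finset (Fin d → ZMod L), A.card = 2 ^ (d * K) ∧ ∀ x ∈ A, x ∈ dyadicBox i fun _ => K := by
  let F : (Fin d → Fin (2 ^ K)) → (Fin d → ZMod L) := fun t k => i k + 2 * ((t k : ℕ) : ZMod L)
  have hF : Function.Injective F := by
    intro s t h
    funext k
    have hk : i k + 2 * ((s k : ℕ) : ZMod L) = i k + 2 * ((t k : ℕ) : ZMod L) := congrFun h k
    have hk' : ((2 * (s k : ℕ) : ℕ) : ZMod L) = ((2 * (t k : ℕ) : ℕ) : ZMod L) := by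
      push_cast; exact add_left_cancel hk
    have := congrArg ZMod.val hk'
    have hs := (s k).2
    have ht := (t k).2
    rw [ZMod.val_natCast_of_lt (by omega), ZMod.val_natCast_of_lt (by omega)] at this
    exact Fin.ext (by omega)
  refine ⟨Finset.univ.image F, ?_, ?_⟩
  · rw [Finset.card_image_of_injective _ hF, Finset.card_univ]
    simp [← pow_mul, mul_comm]
  · intro x hx
    obtain ⟨t, -, rfl⟩ := Finset.mem_image.1 hx
    exact fun k => ⟨t k, (t k).2, rfl⟩

end Torus

section Potential

variable {V : ℝ → ℝ}

lemma even_convex_nonneg (hVeven : ∀ x, V (-x) = V x) (hVconvex : ConvexOn ℝ Set.univ V)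
    (hV0 : V 0 = 0) (x : ℝ) : 0 ≤ V x := by
  have h := hVconvex.2 (Set.mem_univ x) (Set.mem_univ (-x))
    (show (0 : ℝ) ≤ 1 / 2 by norm_num) (show (0 : ℝ) ≤ 1 / 2 by norm_num) (by norm_num)
  simp only [smul_eq_mul, hVeven] at h
  rw [show (1 / 2 : ℝ) * x + 1 / 2 * -x = 0 by ring, hV0] at h
  linarith

lemma convex_mul_le (hVconvex : ConvexOn ℝ Set.univ V) (hV0 : V 0 = 0) {x y : ℝ} (hx : 0 ≤ x)
    (hxy : x ≤ y) : y * V x ≤ x * V y := by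
  rcases (hx.trans hxy).eq_or_lt with h | hy
  · have : x = 0 := by linarith
    simp [this, ← h]
  have h := hVconvex.2 (Set.mem_univ y) (Set.mem_univ (0 : ℝ))
    (show 0 ≤ x / y by positivity)
    (show 0 ≤ 1 - x / y by rw [sub_nonneg, div_le_one hy]; exact hxy) (by ring)
  simp only [smul_eq_mul, hV0, mul_zero, add_zero] at h
  rw [div_mul_cancel₀ _ hy.ne', div_mul_eq_mul_div, le_div_iff₀ hy] at h
  linarith

lemma even_convex_mono (hVeven : ∀ x, V (-x) = V x) (hVconvex : ConvexOn ℝ Set.univ V)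
    (hV0 : V 0 = 0) {x y : ℝ} (hx : 0 ≤ x) (hxy : x ≤ y) : V x ≤ V y := by
  rcases (hx.trans hxy).eq_or_lt with h | hy
  · have : x = y := by linarith
    rw [this]
  have h1 := convex_mul_le hVconvex hV0 hx hxy
  have h2 := mul_le_mul_of_nonneg_right hxy (even_convex_nonneg hVeven hVconvex hV0 y)
  exact le_of_mul_le_mul_left (h1.trans h2) hy

/-- A nonzero even convex function vanishing at `0` grows at least linearly. -/
lemma exists_linear_lower_bound (hVeven : ∀ x, V (-x) = V x) (hVconvex : ConvexOn ℝ Set.univ V)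
    (hVne : V ≠ 0) (hV0 : V 0 = 0) : ∃ s > 0, ∃ x₀ : ℝ, ∀ x, 0 ≤ x → s * (x - x₀) ≤ V x := by
  obtain ⟨z, hz⟩ := Function.ne_iff.1 hVne
  have hz' : V |z| ≠ 0 := by
    rcases abs_choice z with h | h <;> rw [h]
    · exact hz
    · rw [hVeven]; exact hz
  have hVpos : 0 < V |z| := lt_of_le_of_ne (even_convex_nonneg hVeven hVconvex hV0 _) hz'.symm
  have hzpos : 0 < |z| := lt_of_le_of_ne (abs_nonneg z) fun h => hz' (by rw [← h, hV0])
  refine ⟨V |z| / |z|, by positivity, |z|, fun x hx => ?_⟩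
  rcases le_total x |z| with h | h
  · refine le_trans ?_ (even_convex_nonneg hVeven hVconvex hV0 x)
    exact mul_nonpos_of_nonneg_of_nonpos (by positivity) (by linarith)
  · have := convex_mul_le hVconvex hV0 (abs_nonneg z) h
    rw [div_mul_eq_mul_div, div_le_iff₀ hzpos]
    nlinarith

lemma convex_measurable (hVconvex : ConvexOn ℝ Set.univ V) : Measurable V :=
  (continuousOn_univ.1 (hVconvex.continuousOn isOpen_univ)).measurable

lemma integrableOn_exp_neg_mul (hVeven : ∀ x, V (-x) = V x) (hVconvex : ConvexOn ℝ Set.univ V)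
    (hVne : V ≠ 0) (hV0 : V 0 = 0) {c : ℝ} (hc : 0 < c) :
    IntegrableOn (fun x => Real.exp (-(c * V x))) (Set.Ici 0) := by
  obtain ⟨s, hs, x₀, hlow⟩ := exists_linear_lower_bound hVeven hVconvex hVne hV0
  have h1 : IntegrableOn (fun x => Real.exp (c * s * x₀) * Real.exp (-(c * s) * x)) (Set.Ici 0) :=
    ((integrableOn_Ici_iff_integrableOn_Ioi (by finiteness)).2
      (exp_neg_integrableOn_Ioi 0 (by positivity))).const_mul _
  refine h1.mono' ((convex_measurable hVconvex).const_mul c).neg.exp.aestronglyMeasurable ?_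
  refine (ae_restrict_iff' measurableSet_Ici).2 (Eventually.of_forall fun x hx => ?_)
  rw [Real.norm_eq_abs, abs_of_pos (Real.exp_pos _), ← Real.exp_add]
  refine Real.exp_le_exp.2 ?_
  have := mul_le_mul_of_nonneg_left (hlow x hx) hc.le
  linarith

lemma le_of_Vinv_lt (hVeven : ∀ x, V (-x) = V x) (hVconvex : ConvexOn ℝ Set.univ V)
    (hVne : V ≠ 0) (hV0 : V 0 = 0) {x y : ℝ} (h : Vinv V y < x) : y ≤ V x := by
  obtain ⟨s, hs, x₀, hlow⟩ := exists_linear_lower_bound hVeven hVconvex hVne hV0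
  have hne : {x : ℝ | 0 ≤ x ∧ y ≤ V x}.Nonempty := by
    refine ⟨max 0 (y / s + x₀), le_max_left _ _, le_trans ?_ (hlow _ (le_max_left _ _))⟩
    have : y / s ≤ max 0 (y / s + x₀) - x₀ := by linarith [le_max_right 0 (y / s + x₀)]
    calc y = s * (y / s) := by field_simp
      _ ≤ _ := by gcongr
  obtain ⟨z, ⟨hz0, hzy⟩, hzx⟩ := exists_lt_of_csInf_lt hne h
  exact hzy.trans (even_convex_mono hVeven hVconvex hV0 hz0 hzx.le)

lemma Vinv_nonneg (y : ℝ) : 0 ≤ Vinv V y := Real.sInf_nonneg fun _ hx => hx.1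

/-- The hard-wall single-site Boltzmann weight. -/
noncomputable def siteWeight (lam : ℝ) (V : ℝ → ℝ) : ℝ → ℝ :=
  (Set.Ici 0).indicator fun x => Real.exp (-(lam * V x))

lemma siteWeight_nonneg (lam : ℝ) (V : ℝ → ℝ) (x : ℝ) : 0 ≤ siteWeight lam V x :=
  Set.indicator_nonneg (fun _ _ => (Real.exp_pos _).le) x

lemma integrable_siteWeight (hVeven : ∀ x, V (-x) = V x) (hVconvex : ConvexOn ℝ Set.univ V)
    (hVne : V ≠ 0) (hV0 : V 0 = 0) {lam : ℝ} (hlam : 0 < lam) (η : ℝ) :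
    Integrable (siteWeight lam V) (volume + ENNReal.ofReal η • Measure.dirac (0 : ℝ)) := by
  refine Integrable.add_measure ?_ ?_
  · exact (integrable_indicator_iff measurableSet_Ici).2
      (integrableOn_exp_neg_mul hVeven hVconvex hVne hV0 hlam)
  · refine Integrable.smul_measure ?_ ENNReal.ofReal_ne_top
    exact integrable_dirac (by simp)

/-- Tail bound for the single-site weight. -/
lemma setIntegral_siteWeight_le (hVeven : ∀ x, V (-x) = V x) (hVconvex : ConvexOn ℝ Set.univ V)
    (hVne : V ≠ 0) (hV0 : V 0 = 0) {lam : ℝ} (hlam : 0 < lam) (η y : ℝ) :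
    ∫ x in Set.Ioi (Vinv V y), siteWeight lam V x
        ∂(volume + ENNReal.ofReal η • Measure.dirac (0 : ℝ)) ≤
      (∫ x in Set.Ici 0, Real.exp (-(lam / 4 * V x))) * Real.exp (-(3 / 4 * lam * y)) := by
  have hM := Vinv_nonneg (V := V) y
  have hrestrict : (volume + ENNReal.ofReal η • Measure.dirac (0 : ℝ)).restrict
      (Set.Ioi (Vinv V y)) = volume.restrict (Set.Ioi (Vinv V y)) := by
    rw [Measure.restrict_add, Measure.restrict_smul, restrict_dirac, if_neg (by simpa using hM)]
    simp
  have hint := integrableOn_exp_neg_mul hVeven hVconvex hVne hV0 (c := lam / 4) (by positivity)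
  have hsub : Set.Ioi (Vinv V y) ⊆ Set.Ici 0 := fun x hx => hM.trans (le_of_lt hx)
  rw [hrestrict, ← integral_mul_const]
  calc ∫ x in Set.Ioi (Vinv V y), siteWeight lam V x
      ≤ ∫ x in Set.Ioi (Vinv V y),
          Real.exp (-(lam / 4 * V x)) * Real.exp (-(3 / 4 * lam * y)) := by
        refine setIntegral_mono_on ?_ ((hint.mono_set hsub).mul_const _) measurableSet_Ioi ?_
        · exact ((integrable_indicator_iff measurableSet_Ici).2
            (integrableOn_exp_neg_mul hVeven hVconvex hVne hV0 hlam)).integrableOn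
        · intro x hx
          rw [siteWeight, Set.indicator_of_mem (hsub hx), ← Real.exp_add]
          refine Real.exp_le_exp.2 ?_
          have := mul_le_mul_of_nonneg_left (le_of_Vinv_lt hVeven hVconvex hVne hV0 hx)
            (by positivity : 0 ≤ 3 / 4 * lam)
          linarith
    _ ≤ _ := by
        refine setIntegral_mono_set (hint.mul_const _) ?_ hsub.eventuallyLE
        exact Eventually.of_forall fun x => by positivity

end Potential

section Bounds

variable {d L : ℕ} [NeZero L] {V : ℝ → ℝ}

lemma card_torus : Fintype.card (Fin d → ZMod L) = L ^ d := by
  simp [ZMod.card]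

lemma densPer_le_prod_siteWeight (lam : ℝ) (φ : (Fin d → ZMod L) → ℝ) :
    densPer d L lam V φ ≤ ∏ i, siteWeight lam V (φ i) := by
  unfold densPer
  split_ifs with h
  · have : ∀ i, siteWeight lam V (φ i) = Real.exp (-(lam * V (φ i))) := fun i =>
      Set.indicator_of_mem (h i) _
    simp only [this]
    rw [← Real.exp_sum, Real.exp_le_exp, Finset.sum_neg_distrib, neg_le_neg_iff, HamPer,
      Finset.mul_sum _ _ lam]
    refine le_add_of_nonneg_left (mul_nonneg (by positivity) ?_)
    refine Finset.sum_nonneg fun i _ => Finset.sum_nonneg fun j _ => ?_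
    split_ifs <;> positivity
  · exact Finset.prod_nonneg fun i _ => siteWeight_nonneg _ _ _

/-- Dropping the gradient term bounds the Gibbs weight by independent sites. -/
lemma gibbsPer_forall_lt_le {lam η : ℝ}
    (hw : Integrable (siteWeight lam V) (volume + ENNReal.ofReal η • Measure.dirac (0 : ℝ)))
    {T B M : ℝ} (hB : 1 ≤ B)
    (hwB : ∫ x, siteWeight lam V x ∂(volume + ENNReal.ofReal η • Measure.dirac (0 : ℝ)) ≤ B)
    (hwT : ∫ x in Set.Ioi M, siteWeight lam V x
      ∂(volume + ENNReal.ofReal η • Measure.dirac (0 : ℝ)) ≤ T)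
    (A : Finset (Fin d → ZMod L)) :
    gibbsPer d L lam η V {φ | ∀ i ∈ A, M < φ i} ≤ ENNReal.ofReal (T ^ A.card * B ^ L ^ d) := by
  set ν := volume + ENNReal.ofReal η • Measure.dirac (0 : ℝ) with hν
  set E : Set ((Fin d → ZMod L) → ℝ) := {φ | ∀ i ∈ A, M < φ i} with hE
  have hEm : MeasurableSet E := measurableSet_forall_lt (A : Set (Fin d → ZMod L)) M
  let h : (Fin d → ZMod L) → ℝ → ℝ := fun i =>
    if i ∈ A then (Set.Ioi M).indicator (siteWeight lam V) else siteWeight lam V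
  have hnn : ∀ i x, 0 ≤ h i x := by
    intro i x
    simp only [h]
    split_ifs
    · exact Set.indicator_nonneg (fun x _ => siteWeight_nonneg _ _ x) x
    · exact siteWeight_nonneg _ _ x
  have hint : ∀ i, Integrable (h i) ν := by
    intro i
    simp only [h]
    split_ifs
    · exact hw.indicator measurableSet_Ioi
    · exact hw
  have hT0 : 0 ≤ T := le_trans (integral_nonneg fun x => siteWeight_nonneg _ _ x) hwT
  have hbound : ∀ i, ∫ x, h i x ∂ν ≤ (if i ∈ A then T else 1) * B := by
    intro i
    simp only [h]
    split_ifs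
    · rw [integral_indicator measurableSet_Ioi]
      exact hwT.trans (le_mul_of_one_le_right hT0 hB)
    · rwa [one_mul]
  unfold gibbsPer priorPer
  rw [withDensity_apply _ hEm, ← lintegral_indicator hEm]
  calc ∫⁻ φ, E.indicator (fun φ => ENNReal.ofReal (densPer d L lam V φ)) φ ∂(Measure.pi fun _ => ν)
      ≤ ∫⁻ φ, ENNReal.ofReal (∏ i, h i (φ i)) ∂(Measure.pi fun _ => ν) := by
        refine lintegral_mono fun φ => ?_
        by_cases hφ : φ ∈ E
        · rw [Set.indicator_of_mem hφ]
          refine ENNReal.ofReal_le_ofReal ((densPer_le_prod_siteWeight lam φ).trans_eq ?_)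
          refine Finset.prod_congr rfl fun i _ => ?_
          simp only [h]
          split_ifs with hi
          · exact (Set.indicator_of_mem (hφ i hi) _).symm
          · rfl
        · rw [Set.indicator_of_notMem hφ]
          exact zero_le
    _ = ENNReal.ofReal (∏ i, ∫ x, h i x ∂ν) := by
        rw [← integral_fintype_prod_eq_prod, ofReal_integral_eq_lintegral_ofReal]
        · exact Integrable.fintype_prod hint
        · exact Eventually.of_forall fun φ => Finset.prod_nonneg fun i _ => hnn i _
    _ ≤ ENNReal.ofReal (T ^ A.card * B ^ L ^ d) := by
        refine ENNReal.ofReal_le_ofReal ?_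
        refine (Finset.prod_le_prod (fun i _ => integral_nonneg (hnn i))
          fun i _ => hbound i).trans_eq ?_
        rw [Finset.prod_mul_distrib, Finset.prod_const, Finset.card_univ, card_torus,
          Finset.prod_ite_mem, Finset.univ_inter, Finset.prod_const]

lemma sum_torusAdj_le (i : Fin d → ZMod L) :
    ∑ j, (if torusAdj d L i j then (1 : ℝ) else 0) ≤ 2 * d := by
  calc ∑ j, (if torusAdj d L i j then (1 : ℝ) else 0)
      ≤ ∑ j, ∑ k : Fin d, ((if j = Function.update i k (i k + 1) then (1 : ℝ) else 0) +
          if j = Function.update i k (i k - 1) then 1 else 0) := by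
        refine Finset.sum_le_sum fun j _ => ?_
        have hnn : ∀ k : Fin d, (0 : ℝ) ≤ (if j = Function.update i k (i k + 1) then (1 : ℝ) else 0) +
          if j = Function.update i k (i k - 1) then 1 else 0 := fun k => by positivity
        split_ifs with h
        · obtain ⟨k, hk⟩ := h
          refine le_trans ?_ (Finset.single_le_sum (fun k _ => hnn k) (Finset.mem_univ k))
          rcases hk with hk | hk
          · rw [if_pos hk]
            exact le_add_of_nonneg_right (by positivity)
          · rw [if_pos hk]
            exact le_add_of_nonneg_left (by positivity)
        · exact Finset.sum_nonneg fun k _ => hnn k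
    _ = 2 * d := by
        rw [Finset.sum_comm]
        simp [Finset.sum_add_distrib]
        ring

/-- Restricting to `[0, 1]` bounds the partition function from below. -/
lemma le_gibbsPer_univ (hmono : ∀ x, 0 ≤ x → x ≤ 1 → V x ≤ V 1) {lam : ℝ} (hlam : 0 ≤ lam)
    (η : ℝ) :
    ENNReal.ofReal (Real.exp (-(1 / 4 + lam * V 1)) ^ L ^ d) ≤ gibbsPer d L lam η V Set.univ := by
  set C : Set ((Fin d → ZMod L) → ℝ) := Set.univ.pi fun _ => Set.Icc (0 : ℝ) 1 with hC
  have hCm : MeasurableSet C := MeasurableSet.univ_pi fun _ => measurableSet_Icc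
  have hprior : 1 ≤ priorPer d L η C := by
    unfold priorPer
    rw [hC, Measure.pi_pi]
    refine Finset.one_le_prod' fun i _ => ?_
    rw [Measure.add_apply, Real.volume_Icc]
    simp
  have hdens : ∀ φ ∈ C, Real.exp (-(1 / 4 + lam * V 1)) ^ L ^ d ≤ densPer d L lam V φ := by
    intro φ hφ
    have hφ' : ∀ i, 0 ≤ φ i ∧ φ i ≤ 1 := fun i => hφ i (Set.mem_univ i)
    rw [densPer, if_pos fun i => (hφ' i).1, ← Real.exp_nat_mul]
    refine Real.exp_le_exp.2 ?_
    have hcard : (Finset.univ : Finset (Fin d → ZMod L)).card = L ^ d := by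
      rw [Finset.card_univ, card_torus]
    have hVsum : ∑ i, V (φ i) ≤ (L : ℝ) ^ d * V 1 := by
      refine (Finset.sum_le_card_nsmul _ _ (V 1)
        fun i _ => hmono _ (hφ' i).1 (hφ' i).2).trans_eq ?_
      rw [hcard, nsmul_eq_mul]; push_cast; ring
    have hGsum : ∑ i, ∑ j, (if torusAdj d L i j then (φ i - φ j) ^ 2 else 0) ≤
        (L : ℝ) ^ d * (2 * d) := by
      refine (Finset.sum_le_card_nsmul _ _ (2 * (d : ℝ)) fun i _ => ?_).trans_eq ?_
      · refine le_trans (Finset.sum_le_sum fun j _ => ?_) (sum_torusAdj_le i)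
        split_ifs
        · have h1 := hφ' i
          have h2 := hφ' j
          rw [sq_le_one_iff_abs_le_one, abs_le]
          constructor <;> linarith
        · exact le_rfl
      · rw [hcard, nsmul_eq_mul]; push_cast; ring
    have hG : (1 / (8 * d) : ℝ) * ∑ i, ∑ j, (if torusAdj d L i j then (φ i - φ j) ^ 2 else 0) ≤
        (L : ℝ) ^ d * (1 / 4) := by
      refine (mul_le_mul_of_nonneg_left hGsum (by positivity)).trans ?_
      rcases eq_or_ne (d : ℝ) 0 with h0 | h0
      · rw [h0]; simp
      · refine le_of_eq ?_
        field_simp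
        ring
    have hVlam := mul_le_mul_of_nonneg_left hVsum hlam
    unfold HamPer
    push_cast
    linarith
  calc ENNReal.ofReal (Real.exp (-(1 / 4 + lam * V 1)) ^ L ^ d)
      ≤ ENNReal.ofReal (Real.exp (-(1 / 4 + lam * V 1)) ^ L ^ d) * priorPer d L η C :=
        le_mul_of_one_le_right' hprior
    _ = ∫⁻ _ in C, ENNReal.ofReal (Real.exp (-(1 / 4 + lam * V 1)) ^ L ^ d) ∂priorPer d L η := by
        rw [setLIntegral_const]
    _ ≤ ∫⁻ φ in C, ENNReal.ofReal (densPer d L lam V φ) ∂priorPer d L η :=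
        setLIntegral_mono' hCm fun φ hφ => ENNReal.ofReal_le_ofReal (hdens φ hφ)
    _ = gibbsPer d L lam η V C := (withDensity_apply _ hCm).symm
    _ ≤ gibbsPer d L lam η V Set.univ := measure_mono (Set.subset_univ _)

end Bounds

/-- Every site exceeds the truncation level with probability at most a constant times
`L ^ (-3 d / 2)`. -/
lemma exists_gibbsPer_real_lt_le (d : ℕ) {V : ℝ → ℝ} (hVeven : ∀ x, V (-x) = V x)
    (hVconvex : ConvexOn ℝ Set.univ V) (hVne : V ≠ 0) (hV0 : V 0 = 0) {lam : ℝ} (hlam : 0 < lam)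
    (η : ℝ) :
    ∃ D : ℝ, 0 ≤ D ∧ ∀ (L : ℕ) [NeZero L], Even L → IsFiniteMeasure (gibbsPer d L lam η V) ∧
      ∀ i, (gibbsPer d L lam η V).real {φ | Vinv V (2 * d / lam * Real.log L) < φ i} ≤
        D * Real.exp (-(3 / 2 * d * Real.log L)) * (gibbsPer d L lam η V).real Set.univ := by
  set a := ∫ x in Set.Ici 0, Real.exp (-(lam / 4 * V x)) with ha
  set B := max 1 (∫ x, siteWeight lam V x
    ∂(volume + ENNReal.ofReal η • Measure.dirac (0 : ℝ))) with hB
  set c := 1 / 4 + lam * V 1 with hc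
  have ha0 : 0 ≤ a := integral_nonneg fun x => (Real.exp_pos _).le
  have hB1 : 1 ≤ B := le_max_left _ _
  have hc0 : 0 ≤ c := by
    have := even_convex_nonneg hVeven hVconvex hV0 1
    positivity
  have hw := integrable_siteWeight hVeven hVconvex hVne hV0 hlam η
  refine ⟨a * (B * Real.exp c) ^ 4 ^ d, by positivity, fun L _ hL => ?_⟩
  set y := 2 * d / lam * Real.log L with hy
  set M := Vinv V y with hM
  set q := Real.exp (-(3 / 2 * d * Real.log L)) with hq
  have hT : ∫ x in Set.Ioi M, siteWeight lam V x
      ∂(volume + ENNReal.ofReal η • Measure.dirac (0 : ℝ)) ≤ a * q := by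
    have h := setIntegral_siteWeight_le hVeven hVconvex hVne hV0 hlam η y
    have hqy : 3 / 4 * lam * y = 3 / 2 * d * Real.log L := by
      rw [hy]; field_simp; norm_num
    rwa [hqy] at h
  have hup := fun A : Finset (Fin d → ZMod L) =>
    gibbsPer_forall_lt_le hw hB1 (le_max_right _ _) hT A
  have hlow := le_gibbsPer_univ (d := d) (L := L)
    (fun x h0 h1 => even_convex_mono hVeven hVconvex hV0 h0 h1) hlam.le η
  set μ := gibbsPer d L lam η V with hμ
  have hfin : IsFiniteMeasure μ := by
    refine ⟨lt_of_le_of_lt ?_ (ENNReal.ofReal_lt_top (r := (a * q) ^ 0 * B ^ L ^ d))⟩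
    simpa using hup ∅
  refine ⟨hfin, fun i => ?_⟩
  have hZlow : Real.exp (-c) ^ L ^ d ≤ μ.real Set.univ :=
    (ENNReal.ofReal_le_iff_le_toReal (measure_ne_top _ _)).1 hlow
  have hZ : 0 < μ.real Set.univ := lt_of_lt_of_le (by positivity) hZlow
  rw [← div_le_iff₀ hZ]
  obtain ⟨m, hm⟩ := hL
  have hL0 : L ≠ 0 := NeZero.ne L
  set K := Nat.log 2 m with hK
  have hK1 : 2 ^ K ≤ m := Nat.pow_log_le_self 2 (by omega)
  have hK2 : m < 2 ^ (K + 1) := Nat.lt_pow_succ_log_self (by norm_num) m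
  have hKL : 2 * 2 ^ K ≤ L := by omega
  obtain ⟨A, hAcard, hA⟩ := exists_finset_subset_dyadicBox i K hKL
  have hchess := gibbsPer_real_pow_le ⟨m, hm⟩ lam η (convex_measurable hVconvex) hZ M i K hKL
    (d * K) (fun _ => K) (fun _ => le_rfl) (by simp)
  have hN : L ^ d ≤ 4 ^ d * 2 ^ (d * K) := by
    rw [mul_comm d K, pow_mul, ← mul_pow]
    refine Nat.pow_le_pow_left ?_ d
    rw [pow_succ] at hK2
    omega
  refine le_of_pow_le_pow_left₀ (n := 2 ^ (d * K)) (by positivity) (by positivity) ?_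
  refine hchess.trans ?_
  have hAup : μ.real {φ | ∀ x ∈ dyadicBox i fun _ => K, M < φ x} ≤
      (a * q) ^ 2 ^ (d * K) * B ^ L ^ d := by
    have hsub : {φ : (Fin d → ZMod L) → ℝ | ∀ x ∈ dyadicBox i fun _ => K, M < φ x} ⊆
        {φ | ∀ x ∈ A, M < φ x} := fun φ hφ x hx => hφ x (hA x hx)
    refine (measureReal_mono hsub (measure_ne_top _ _)).trans ?_
    refine ENNReal.toReal_le_of_le_ofReal (by positivity) ?_
    rw [← hAcard]
    exact hup A
  calc μ.real {φ | ∀ x ∈ dyadicBox i fun _ => K, M < φ x} / μ.real Set.univ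
      ≤ ((a * q) ^ 2 ^ (d * K) * B ^ L ^ d) / Real.exp (-c) ^ L ^ d := by gcongr
    _ = (a * q) ^ 2 ^ (d * K) * (B * Real.exp c) ^ L ^ d := by
        rw [mul_pow B, Real.exp_neg, inv_pow, div_inv_eq_mul, mul_assoc]
    _ ≤ (a * q) ^ 2 ^ (d * K) * (B * Real.exp c) ^ (4 ^ d * 2 ^ (d * K)) := by
        gcongr
        exact one_le_mul_of_one_le_of_one_le hB1 (Real.one_le_exp hc0)
    _ = (a * (B * Real.exp c) ^ 4 ^ d * q) ^ 2 ^ (d * K) := by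
        rw [pow_mul (B * Real.exp c), ← mul_pow, mul_right_comm]

/-- **Equation (4).** For `d ≥ 2`, `λ > 0`, `η ≥ 0` and all sufficiently large even `L`,
`(1/2) Z^{+,per}_{L;λ,η} ≤ Z^{+,per}_{L;λ,η}[φ_i ≤ V^{-1}((2d/λ) log L) ∀i] ≤ Z^{+,per}_{L;λ,η}`. -/
theorem ZplusPer_truncated_comparable
    (d : ℕ) (hd : 2 ≤ d)
    (V : ℝ → ℝ) (hVeven : ∀ x, V (-x) = V x) (hVconvex : ConvexOn ℝ Set.univ V)
    (hVne : V ≠ 0) (hV0 : V 0 = 0)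
    (lam : ℝ) (hlam : 0 < lam) (η : ℝ) (hη : 0 ≤ η) :
    ∃ L₀ : ℕ, ∀ L : ℕ, ∀ hL : 0 < L, L₀ ≤ L → Even L →
      (1 / 2) * @ZplusPer d L ⟨hL.ne'⟩ lam η V ≤
        @ZplusPerIn d L ⟨hL.ne'⟩ lam η V
          {φ | ∀ i, φ i ≤ Vinv V (2 * d / lam * Real.log L)} ∧
      @ZplusPerIn d L ⟨hL.ne'⟩ lam η V
          {φ | ∀ i, φ i ≤ Vinv V (2 * d / lam * Real.log L)} ≤
        @ZplusPer d L ⟨hL.ne'⟩ lam η V := by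
  obtain ⟨D, hD0, hD⟩ := exists_gibbsPer_real_lt_le d hVeven hVconvex hVne hV0 hlam η
  refine ⟨⌈2 * D⌉₊ + 2, fun L hL hLL hLe => ?_⟩
  have : NeZero L := ⟨hL.ne'⟩
  obtain ⟨hfin, hsite⟩ := hD L hLe
  set M := Vinv V (2 * d / lam * Real.log L) with hM
  set μ := gibbsPer d L lam η V with hμ
  set G : Set ((Fin d → ZMod L) → ℝ) := {φ | ∀ i, φ i ≤ M} with hG
  have hLpos : (0 : ℝ) < L := by exact_mod_cast hL
  have hGc : Gᶜ = ⋃ i, {φ | M < φ i} := by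
    ext φ
    simp [hG]
  have hGm : MeasurableSet G := by
    rw [← MeasurableSet.compl_iff, hGc]
    exact MeasurableSet.iUnion fun i => measurableSet_lt measurable_const (measurable_pi_apply i)
  have hhalf : μ.real Gᶜ ≤ 1 / 2 * μ.real Set.univ := by
    have hexp : (L : ℝ) ^ d * Real.exp (-(3 / 2 * d * Real.log L)) ≤ (L : ℝ)⁻¹ := by
      have hlog : 0 ≤ Real.log L := Real.log_nonneg (by exact_mod_cast hL)
      have hd' : (2 : ℝ) ≤ d := by exact_mod_cast hd
      rw [← Real.exp_log hLpos, ← Real.exp_nat_mul, ← Real.exp_add, ← Real.exp_neg,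
        Real.log_exp]
      refine Real.exp_le_exp.2 ?_
      nlinarith
    have hDL : D * (L : ℝ)⁻¹ ≤ 1 / 2 := by
      rw [← div_eq_mul_inv, div_le_iff₀ hLpos]
      have h1 : 2 * D ≤ ⌈2 * D⌉₊ := Nat.le_ceil _
      have h2 : ((⌈2 * D⌉₊ + 2 : ℕ) : ℝ) ≤ L := by exact_mod_cast hLL
      push_cast at h2
      linarith
    calc μ.real Gᶜ ≤ ∑ i, μ.real {φ | M < φ i} := by
          rw [hGc]; exact measureReal_iUnion_fintype_le _
      _ ≤ ∑ _i : Fin d → ZMod L, D * Real.exp (-(3 / 2 * d * Real.log L)) * μ.real Set.univ :=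
          Finset.sum_le_sum fun i _ => hsite i
      _ = D * ((L : ℝ) ^ d * Real.exp (-(3 / 2 * d * Real.log L))) * μ.real Set.univ := by
          rw [Finset.sum_const, Finset.card_univ, card_torus, nsmul_eq_mul]
          push_cast
          ring
      _ ≤ D * (L : ℝ)⁻¹ * μ.real Set.univ := by gcongr
      _ ≤ 1 / 2 * μ.real Set.univ := by gcongr
  have hadd : μ.real G + μ.real Gᶜ = μ.real Set.univ := measureReal_add_measureReal_compl hGm
  refine ⟨?_, measureReal_mono (μ := μ) (Set.subset_univ G)⟩
  change 1 / 2 * μ.real Set.univ ≤ μ.real G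
  linarith
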